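/- arXiv:1105.4983 — 2 statements merged into one kernel-verified Lean document; each statement's English description precedes it below -/
import Mathlib

section
/- For any two nonzero vectors v, w ∈ (ℤ/2ℤ)⁴ with v₂ = v₄ = 0 and w₂ = w₄ = 0, there exists M ∈ G_Δ such that multiplying v by the reduction of E(M) modulo 2 yields w. (That is, the three nonzero 2-torsion classes in im φ₂ form a single orbit under the monodromy action of the paramodular group.) -/
open Matrix

/-- The standard symplectic matrix `J = [[0, I₂], [−I₂, 0]]` over `ℚ`. -/
def Jmat : Matrix (Fin 4) (Fin 4) ℚ :=
  !![0, 0, 1, 0; 0, 0, 0, 1; -1, 0, 0, 0; 0, -1, 0, 0]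

/-- A rational number is an integer. -/
def IsIntEntry (q : ℚ) : Prop := ∃ n : ℤ, q = n

/-- A rational number is an even integer (lies in `2ℤ`). -/
def IsEvenEntry (q : ℚ) : Prop := ∃ n : ℤ, q = 2 * n

/-- A rational number is a half-integer (`2·q ∈ ℤ`). -/
def IsHalfIntEntry (q : ℚ) : Prop := ∃ n : ℤ, 2 * q = n

/-- Membership in the paramodular group `G_Δ` for `Δ = diag(1,2)`:
`Mᵀ·J·M = J`, together with the integrality pattern: all entries in `ℤ`,
except that `M₁₄, M₂₁, M₂₃, M₂₄, M₃₄ ∈ 2ℤ` and `2·M₄₂ ∈ ℤ`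
(indices here are 0-based: `M 0 3, M 1 0, M 1 2, M 1 3, M 2 3, M 3 1`). -/
def IsParamodular (M : Matrix (Fin 4) (Fin 4) ℚ) : Prop :=
  Mᵀ * Jmat * M = Jmat ∧
  IsEvenEntry (M 0 3) ∧ IsEvenEntry (M 1 0) ∧ IsEvenEntry (M 1 2) ∧
  IsEvenEntry (M 1 3) ∧ IsEvenEntry (M 2 3) ∧ IsHalfIntEntry (M 3 1) ∧
  ∀ i j : Fin 4,
    (i, j) ∉ ({(0, 3), (1, 0), (1, 2), (1, 3), (2, 3), (3, 1)} :
      Set (Fin 4 × Fin 4)) → IsIntEntry (M i j)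

/-- The diagonal matrix `D = diag(1,1,1,2)` over `ℚ`. -/
def Dmat : Matrix (Fin 4) (Fin 4) ℚ :=
  !![1, 0, 0, 0; 0, 1, 0, 0; 0, 0, 1, 0; 0, 0, 0, 2]

/-- The conjugation `E(M) = D·M·D⁻¹`. -/
noncomputable def Emat (M : Matrix (Fin 4) (Fin 4) ℚ) : Matrix (Fin 4) (Fin 4) ℚ :=
  Dmat * M * Dmat⁻¹

/-- Reduction modulo 2 of a rational matrix with integer entries
(entrywise, via the numerator). -/
def red2 (M : Matrix (Fin 4) (Fin 4) ℚ) : Matrix (Fin 4) (Fin 4) (ZMod 2) :=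
  Matrix.of fun i j => ((M i j).num : ZMod 2)

/-!
`G_Δ` contains a copy of `SL₂(ℤ)` acting on the symplectic plane spanned by the first and third
coordinate vectors and fixing the other two. It commutes with `D`, so `E` fixes it pointwise, and
the reduction of `E(M)` modulo 2 acts on `im φ₂ ≃ 𝔽₂²` through `SL₂(ℤ) → SL₂(𝔽₂)`. This map is
onto because `SL₂` of a field is generated by transvections, which lift entrywise, and `SL₂(𝔽₂)`
is transitive on the nonzero vectors.
-/

open scoped MatrixGroups

section SpecialLinearGroup

theorem exists_SL2_smul_single_eq {R : Type*} [CommRing R] {x : Fin 2 → R}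
    (hx : IsCoprime (x 0) (x 1)) : ∃ g : SL(2, R), g • Pi.single 0 1 = x := by
  obtain ⟨g, hg0, hg1⟩ := hx.exists_SL2_col 0
  refine ⟨g, ?_⟩
  ext i
  fin_cases i <;> simp [Matrix.SpecialLinearGroup.smul_def, hg0, hg1]

theorem exists_SL2_smul_eq {R : Type*} [CommRing R] {x y : Fin 2 → R}
    (hx : IsCoprime (x 0) (x 1)) (hy : IsCoprime (y 0) (y 1)) : ∃ g : SL(2, R), g • x = y := by
  obtain ⟨g, rfl⟩ := exists_SL2_smul_single_eq hx
  obtain ⟨h, rfl⟩ := exists_SL2_smul_single_eq hy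
  exact ⟨h * g⁻¹, by rw [mul_smul, inv_smul_smul]⟩

theorem isCoprime_of_ne_zero {F : Type*} [Semifield F] {x : Fin 2 → F} (hx : x ≠ 0) :
    IsCoprime (x 0) (x 1) := by
  rw [Semifield.isCoprime_iff]
  contrapose! hx
  ext i
  fin_cases i
  exacts [hx.1, hx.2]

variable {R F : Type*} [CommRing R] [Field F] {f : R →+* F}

theorem SL2_map_surjective (hf : Function.Surjective f) :
    Function.Surjective (SpecialLinearGroup.map (n := Fin 2) f) := by
  refine SL2.transvection_induction _ (fun i j hij c ↦ ?_) ?_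
  · obtain ⟨b, rfl⟩ := hf c
    refine ⟨SpecialLinearGroup.transvection hij b, ?_⟩
    ext k l
    simp [SpecialLinearGroup.transvection_coe, one_apply, single_apply, apply_ite f]
  · rintro _ _ ⟨A, rfl⟩ ⟨B, rfl⟩
    exact ⟨A * B, map_mul _ A B⟩

theorem exists_SL2_map_smul_eq (hf : Function.Surjective f) {x y : Fin 2 → F}
    (hx : x ≠ 0) (hy : y ≠ 0) : ∃ g : SL(2, R), SpecialLinearGroup.map f g • x = y := by
  obtain ⟨h, hxy⟩ := exists_SL2_smul_eq (isCoprime_of_ne_zero hx) (isCoprime_of_ne_zero hy)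
  obtain ⟨g, rfl⟩ := SL2_map_surjective hf h
  exact ⟨g, hxy⟩

end SpecialLinearGroup

section Plane

variable {R S : Type*}

/-- The vector with first and third coordinates `x`, in the plane `v₂ = v₄ = 0`. Over `ZMod 2`
these vectors make up `im φ₂`. -/
def planeVec [Zero R] (x : Fin 2 → R) : Fin 4 → R :=
  ![x 0, 0, x 1, 0]

/-- The matrix acting as `A` on the first and third coordinates and as the identity on the second
and fourth. For `A ∈ SL₂(ℤ)` these are the elements of `G_Δ` realising the monodromy on `im φ₂`. -/
def planeMatrix [Zero R] [One R] (A : Matrix (Fin 2) (Fin 2) R) : Matrix (Fin 4) (Fin 4) R :=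
  !![A 0 0, 0, A 0 1, 0;
     0, 1, 0, 0;
     A 1 0, 0, A 1 1, 0;
     0, 0, 0, 1]

theorem planeVec_eq_self [Zero R] {v : Fin 4 → R} (h1 : v 1 = 0) (h3 : v 3 = 0) :
    planeVec ![v 0, v 2] = v := by
  ext i
  fin_cases i <;> simp [planeVec, h1, h3]

theorem planeVec_zero [Zero R] : planeVec (0 : Fin 2 → R) = 0 := by
  ext i
  fin_cases i <;> rfl

theorem exists_planeVec_eq [Zero R] {v : Fin 4 → R} (hv : v ≠ 0) (h1 : v 1 = 0) (h3 : v 3 = 0) :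
    ∃ x ≠ 0, planeVec x = v := by
  refine ⟨![v 0, v 2], fun hx ↦ hv ?_, planeVec_eq_self h1 h3⟩
  rw [← planeVec_eq_self h1 h3, hx, planeVec_zero]

theorem planeMatrix_map [NonAssocSemiring R] [NonAssocSemiring S] (f : R →+* S)
    (A : Matrix (Fin 2) (Fin 2) R) : (planeMatrix A).map f = planeMatrix (A.map f) := by
  ext i j
  fin_cases i <;> fin_cases j <;> simp [planeMatrix]

theorem planeMatrix_mulVec_planeVec [NonAssocSemiring R] (A : Matrix (Fin 2) (Fin 2) R)
    (x : Fin 2 → R) : planeMatrix A *ᵥ planeVec x = planeVec (A *ᵥ x) := by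
  ext i
  fin_cases i <;>
    simp [planeMatrix, planeVec, mulVec, dotProduct, Fin.sum_univ_four, Fin.sum_univ_two]

theorem planeMatrix_transpose_mul_Jmat_mul {A : Matrix (Fin 2) (Fin 2) ℚ} (hA : A.det = 1) :
    (planeMatrix A)ᵀ * Jmat * planeMatrix A = Jmat := by
  rw [det_fin_two] at hA
  ext i j
  fin_cases i <;> fin_cases j <;>
    simp [planeMatrix, Jmat, mul_apply, Fin.sum_univ_four] <;> linarith

theorem commute_Dmat_planeMatrix (A : Matrix (Fin 2) (Fin 2) ℚ) :
    Commute Dmat (planeMatrix A) := by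
  ext i j
  fin_cases i <;> fin_cases j <;> simp [planeMatrix, Dmat, mul_apply, Fin.sum_univ_four]

end Plane

theorem isUnit_det_Dmat : IsUnit Dmat.det := by
  have hD : Dmat = diagonal ![1, 1, 1, 2] := by
    ext i j
    fin_cases i <;> fin_cases j <;> rfl
  simp [hD, Fin.prod_univ_four]

theorem Emat_eq_self_of_commute {M : Matrix (Fin 4) (Fin 4) ℚ} (h : Commute Dmat M) :
    Emat M = M := by
  rw [Emat, h.eq, mul_nonsing_inv_cancel_right _ _ isUnit_det_Dmat]

theorem red2_map_intCast (N : Matrix (Fin 4) (Fin 4) ℤ) :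
    red2 (N.map (Int.castRingHom ℚ)) = N.map (Int.castRingHom (ZMod 2)) := by
  ext i j
  simp [red2]

theorem isParamodular_planeMatrix (g : SL(2, ℤ)) :
    IsParamodular (planeMatrix (g.1.map (Int.castRingHom ℚ))) := by
  have hdet : (g.1.map (Int.castRingHom ℚ)).det = 1 :=
    (SpecialLinearGroup.map (Int.castRingHom ℚ) g).det_coe
  refine ⟨planeMatrix_transpose_mul_Jmat_mul hdet, ⟨0, ?_⟩, ⟨0, ?_⟩, ⟨0, ?_⟩, ⟨0, ?_⟩, ⟨0, ?_⟩,
    ⟨0, ?_⟩, fun i j _ ↦ ⟨planeMatrix g.1 i j, ?_⟩⟩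
  case refine_7 => rw [← planeMatrix_map, map_apply, eq_intCast]
  all_goals simp [planeMatrix]

theorem red2_Emat_planeMatrix (A : Matrix (Fin 2) (Fin 2) ℤ) :
    red2 (Emat (planeMatrix (A.map (Int.castRingHom ℚ)))) =
      planeMatrix (A.map (Int.castRingHom (ZMod 2))) := by
  rw [Emat_eq_self_of_commute (commute_Dmat_planeMatrix _), ← planeMatrix_map, red2_map_intCast,
    planeMatrix_map]

/-- The three nonzero 2-torsion classes in `im φ₂` (nonzero vectors with second and
fourth coordinates zero) form a single orbit under the monodromy action of `G_Δ`. -/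
theorem orbit_im_phi2 (v w : Fin 4 → ZMod 2) (hv : v ≠ 0) (hw : w ≠ 0)
    (hv2 : v 1 = 0) (hv4 : v 3 = 0) (hw2 : w 1 = 0) (hw4 : w 3 = 0) :
    ∃ M : Matrix (Fin 4) (Fin 4) ℚ,
      IsParamodular M ∧ (red2 (Emat M)).mulVec v = w := by
  obtain ⟨x, hx, rfl⟩ := exists_planeVec_eq hv hv2 hv4
  obtain ⟨y, hy, rfl⟩ := exists_planeVec_eq hw hw2 hw4
  obtain ⟨g, rfl⟩ :=
    exists_SL2_map_smul_eq (f := Int.castRingHom (ZMod 2)) ZMod.intCast_surjective hx hy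
  refine ⟨planeMatrix (g.1.map (Int.castRingHom ℚ)), isParamodular_planeMatrix g, ?_⟩
  rw [red2_Emat_planeMatrix, planeMatrix_mulVec_planeVec,
    Matrix.SpecialLinearGroup.smul_def, smul_eq_mulVec, SpecialLinearGroup.map_apply_coe,
    RingHom.mapMatrix_apply]
end

section
/- Let ψ₁,...,ψ₁₂ be the twelve vectors of (ℤ/2ℤ)⁴ listed in the context, and for integers b₁₁, b₁₂, b₂₂ let M_b = [[1,0,b₁₁,2b₁₂],[0,1,2b₁₂,2b₂₂],[0,0,1,0],[0,0,0,1]]. Then the permutation of {ψ₁,...,ψ₁₂} induced by multiplication by the reduction of E(M_b) modulo 2 is: (i) if b₁₁ is odd and b₁₂, b₂₂ are even, the permutation (ψ₂ ψ₈)(ψ₅ ψ₁₁)(ψ₆ ψ₁₂), fixing the other six vectors ψ₁, ψ₃, ψ₄, ψ₇, ψ₉, ψ₁₀; (ii) if b₁₂ is odd and b₁₁, b₂₂ are even, the permutation (ψ₁ ψ₇)(ψ₂ ψ₈)(ψ₄ ψ₁₀)(ψ₆ ψ₁₂), fixing ψ₃, ψ₅, ψ₉, ψ₁₁, ψ₁₂...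 fixing the remaining four vectors; (iii) if b₂₂ is odd and b₁₁, b₁₂ are even, the permutation (ψ₁ ψ₄)(ψ₂ ψ₆)(ψ₇ ψ₁₀)(ψ₈ ψ₁₂), fixing the remaining four vectors. -/
open Matrix

/-- The twelve vectors ψ₁,…,ψ₁₂ of `(ℤ/2ℤ)⁴` (those with `(v₂,v₄) ≠ (0,0)`),
indexed by `Fin 12` (ψ_{k+1} = psi k). -/
def psi : Fin 12 → (Fin 4 → ZMod 2) :=
  ![![0, 0, 0, 1], ![0, 0, 1, 1], ![0, 1, 0, 0], ![0, 1, 0, 1],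
    ![0, 1, 1, 0], ![0, 1, 1, 1], ![1, 0, 0, 1], ![1, 0, 1, 1],
    ![1, 1, 0, 0], ![1, 1, 0, 1], ![1, 1, 1, 0], ![1, 1, 1, 1]]

/-- The matrix `M_b`. -/
def Mb (b11 b12 b22 : ℤ) : Matrix (Fin 4) (Fin 4) ℚ :=
  !![1, 0, (b11 : ℚ), 2 * (b12 : ℚ);
     0, 1, 2 * (b12 : ℚ), 2 * (b22 : ℚ);
     0, 0, 1, 0;
     0, 0, 0, 1]

/-- The permutation (ψ₂ ψ₈)(ψ₅ ψ₁₁)(ψ₆ ψ₁₂), in 0-based indices. -/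
def permB1 : Equiv.Perm (Fin 12) := Equiv.swap 1 7 * Equiv.swap 4 10 * Equiv.swap 5 11

/-- The permutation (ψ₁ ψ₇)(ψ₂ ψ₈)(ψ₄ ψ₁₀)(ψ₆ ψ₁₂), in 0-based indices. -/
def permB2 : Equiv.Perm (Fin 12) :=
  Equiv.swap 0 6 * Equiv.swap 1 7 * Equiv.swap 3 9 * Equiv.swap 5 11

/-- The permutation (ψ₁ ψ₄)(ψ₂ ψ₆)(ψ₇ ψ₁₀)(ψ₈ ψ₁₂), in 0-based indices. -/
def permB3 : Equiv.Perm (Fin 12) :=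
  Equiv.swap 0 3 * Equiv.swap 1 5 * Equiv.swap 6 9 * Equiv.swap 7 11

/-!
Since `2 * b₁₂` vanishes modulo 2, the reduction of `E(M_b)` is the product of the three
transvections which (in 1-based coordinates) add `b₁₁ v₃` and `b₁₂ v₄` to `v₁`, and `b₂₂ v₄` to
`v₂`. The transvections with coefficient `1` permute the `ψₖ` by `permB1`, `permB2` and `permB3`,
and transvections compose by adding coefficients, so `E(M_b)` acts by
`permB1 ^ b₁₁ * permB2 ^ b₁₂ * permB3 ^ b₂₂`. The three permutations are involutions, hence only
the parities of the exponents matter.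
-/

section Involution

variable {G : Type*} [Group G] {g : G}

theorem zpow_eq_one_of_sq_eq_one_of_even (hg : g ^ 2 = 1) {n : ℤ} (hn : Even n) : g ^ n = 1 := by
  obtain ⟨m, rfl⟩ := hn.two_dvd
  rw [_root_.zpow_mul, zpow_ofNat, hg, _root_.one_zpow]

theorem zpow_eq_self_of_sq_eq_one_of_odd (hg : g ^ 2 = 1) {n : ℤ} (hn : Odd n) : g ^ n = g := by
  obtain ⟨m, rfl⟩ := hn
  rw [_root_.zpow_add_one, zpow_eq_one_of_sq_eq_one_of_even hg (even_two_mul m), one_mul]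

end Involution

section Transvection

variable {n R ι : Type*} [Fintype n] [DecidableEq n] [CommRing R] {i j : n}

theorem transvection_mulVec_eq_add_single (i j : n) (c : R) (v : n → R) :
    transvection i j c *ᵥ v = v + Pi.single i (c * v j) := by
  simp [transvection, add_mulVec, single_mulVec_eq, ← Pi.single_smul]

theorem transvection_add_mulVec (hij : i ≠ j) (c d : R) (v : n → R) :
    transvection i j (c + d) *ᵥ v = transvection i j c *ᵥ (transvection i j d *ᵥ v) := by
  rw [mulVec_mulVec, transvection_mul_transvection_same _ _ hij]

theorem transvection_neg_mulVec_transvection_mulVec (hij : i ≠ j) (c : R) (v : n → R) :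
    transvection i j (-c) *ᵥ (transvection i j c *ᵥ v) = v := by
  rw [← transvection_add_mulVec hij, neg_add_cancel, transvection_zero, one_mulVec]

theorem transvection_intCast_mulVec_eq_zpow {σ : Equiv.Perm ι} {v : ι → n → R} (hij : i ≠ j)
    (hσ : ∀ k, transvection i j 1 *ᵥ v k = v (σ k)) (m : ℤ) (k : ι) :
    transvection i j (m : R) *ᵥ v k = v ((σ ^ m) k) := by
  have hσ_inv (k : ι) : transvection i j (-1) *ᵥ v k = v (σ⁻¹ k) := by
    obtain ⟨l, rfl⟩ := σ.surjective k
    rw [← hσ, transvection_neg_mulVec_transvection_mulVec hij, Equiv.Perm.inv_def,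
      Equiv.symm_apply_apply]
  induction m with
  | zero => simp
  | succ m ih =>
    rw [add_comm, Int.cast_add, Int.cast_one, transvection_add_mulVec hij, ih, hσ,
      _root_.zpow_one_add, Equiv.Perm.mul_apply]
  | pred m ih =>
    rw [sub_eq_neg_add, Int.cast_add, Int.cast_neg, Int.cast_one, transvection_add_mulVec hij, ih,
      hσ_inv, _root_.zpow_add, _root_.zpow_neg_one, Equiv.Perm.mul_apply]

end Transvection

theorem Dmat_eq_diagonal : Dmat = diagonal ![1, 1, 1, 2] := by
  ext i j
  fin_cases i <;> fin_cases j <;> rfl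

theorem Dmat_inv_eq_diagonal : Dmat⁻¹ = diagonal ![1, 1, 1, 2⁻¹] := by
  refine inv_eq_right_inv ?_
  rw [Dmat_eq_diagonal, diagonal_mul_diagonal, ← diagonal_one]
  congr 1
  ext i
  fin_cases i <;> norm_num

theorem Emat_apply (M : Matrix (Fin 4) (Fin 4) ℚ) (i j : Fin 4) :
    Emat M i j = ![1, 1, 1, 2] i * M i j * ![1, 1, 1, 2⁻¹] j := by
  rw [Emat, Dmat_inv_eq_diagonal, Dmat_eq_diagonal, mul_diagonal, diagonal_mul]

theorem red2_map_intCast_s11 (A : Matrix (Fin 4) (Fin 4) ℤ) :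
    red2 (A.map (Int.cast : ℤ → ℚ)) = A.map (Int.cast : ℤ → ZMod 2) := by
  ext i j
  simp only [red2, of_apply, map_apply, Rat.num_intCast]

theorem Emat_Mb (b11 b12 b22 : ℤ) :
    Emat (Mb b11 b12 b22) =
      (!![1, 0, b11, b12; 0, 1, 2 * b12, b22; 0, 0, 1, 0; 0, 0, 0, 1]).map
        (Int.cast : ℤ → ℚ) := by
  ext i j
  rw [Emat_apply]
  fin_cases i <;> fin_cases j <;> simp [Mb] <;> ring

theorem red2_Emat_Mb (b11 b12 b22 : ℤ) :
    red2 (Emat (Mb b11 b12 b22)) =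
      transvection 0 2 (b11 : ZMod 2) * transvection 0 3 (b12 : ZMod 2) *
        transvection 1 3 (b22 : ZMod 2) := by
  rw [Emat_Mb, red2_map_intCast_s11]
  ext i j
  fin_cases i <;> fin_cases j <;>
    simp [transvection, Matrix.add_mul, Matrix.mul_add, one_apply, CharTwo.two_eq_zero]

theorem transvection_zero_two_mulVec_psi (k : Fin 12) :
    transvection 0 2 1 *ᵥ psi k = psi (permB1 k) := by
  rw [transvection_mulVec_eq_add_single]
  decide +revert

theorem transvection_zero_three_mulVec_psi (k : Fin 12) :
    transvection 0 3 1 *ᵥ psi k = psi (permB2 k) := by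
  rw [transvection_mulVec_eq_add_single]
  decide +revert

theorem transvection_one_three_mulVec_psi (k : Fin 12) :
    transvection 1 3 1 *ᵥ psi k = psi (permB3 k) := by
  rw [transvection_mulVec_eq_add_single]
  decide +revert

theorem permB1_sq : permB1 ^ 2 = 1 := by decide

theorem permB2_sq : permB2 ^ 2 = 1 := by decide

theorem permB3_sq : permB3 ^ 2 = 1 := by decide

theorem Mb_monodromy_permutation_general (b11 b12 b22 : ℤ) (k : Fin 12) :
    (red2 (Emat (Mb b11 b12 b22))).mulVec (psi k) =
      psi ((permB1 ^ b11 * permB2 ^ b12 * permB3 ^ b22) k) := by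
  rw [red2_Emat_Mb, ← mulVec_mulVec, ← mulVec_mulVec,
    transvection_intCast_mulVec_eq_zpow (by decide) transvection_one_three_mulVec_psi,
    transvection_intCast_mulVec_eq_zpow (by decide) transvection_zero_three_mulVec_psi,
    transvection_intCast_mulVec_eq_zpow (by decide) transvection_zero_two_mulVec_psi,
    Equiv.Perm.mul_apply, Equiv.Perm.mul_apply]

/-- The permutation of {ψ₁,…,ψ₁₂} induced by `E(M_b) mod 2` in the three parity
cases of `(b₁₁, b₁₂, b₂₂)`. -/
theorem Mb_monodromy_permutation (b11 b12 b22 : ℤ) :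
    (Odd b11 → Even b12 → Even b22 → ∀ k : Fin 12,
      (red2 (Emat (Mb b11 b12 b22))).mulVec (psi k) = psi (permB1 k)) ∧
    (Odd b12 → Even b11 → Even b22 → ∀ k : Fin 12,
      (red2 (Emat (Mb b11 b12 b22))).mulVec (psi k) = psi (permB2 k)) ∧
    (Odd b22 → Even b11 → Even b12 → ∀ k : Fin 12,
      (red2 (Emat (Mb b11 b12 b22))).mulVec (psi k) = psi (permB3 k)) := by
  refine ⟨fun h₁ h₂ h₃ k ↦ ?_, fun h₂ h₁ h₃ k ↦ ?_, fun h₃ h₁ h₂ k ↦ ?_⟩ <;>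
    simp [Mb_monodromy_permutation_general, zpow_eq_one_of_sq_eq_one_of_even,
      zpow_eq_self_of_sq_eq_one_of_odd, permB1_sq, permB2_sq, permB3_sq, h₁, h₂, h₃]
end
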